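/- Assume condition (R). Then the radius of convexity r^c(h_{γ,σ}(·;q)) = r^c_0(h_{γ,σ}(·;q)) satisfies Γ_q(γ+3)/(4σ²Γ_q(γ+1)) < r^c(h_{γ,σ}(·;q)) < 2Γ_q(γ+3)Γ_q(γ+5) / ( σ²(8Γ_q(γ+1)Γ_q(γ+5) − 9q²Γ_q(γ+3)²) ). -/

import Mathlib

noncomputable def qPochInf (a q : ℝ) : ℝ := ∏' k : ℕ, (1 - a * q ^ k)

noncomputable def qGamma (q x : ℝ) : ℝ :=
  qPochInf q q * (1 - q) ^ (1 - x) / qPochInf (q ^ x) q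

noncomputable def qML (γ σ q : ℝ) (z : ℂ) : ℂ :=
  ∑' n : ℕ,
    (((-1) ^ n * σ ^ (2 * n) * q ^ (n * (n - 1)) / qGamma q (2 * n + γ + 1) : ℝ) : ℂ) * z ^ (2 * n)

noncomputable def qMLR (γ σ q : ℝ) (x : ℝ) : ℝ :=
  ∑' n : ℕ,
    ((-1) ^ n * σ ^ (2 * n) * q ^ (n * (n - 1)) / qGamma q (2 * n + γ + 1)) * x ^ (2 * n)

def condR (q γ : ℝ) : Prop :=
  (γ = 0 ∨ γ = 1) ∨
    (γ ∈ Set.Ioo (0 : ℝ) 2 ∧ γ ≠ 1 ∧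
      1 < q⁻¹ * (1 - q) * (1 - q ^ (γ + 1)) * (1 - q ^ (γ + 2)))

noncomputable def radiusStarlike (α : ℝ) (f : ℂ → ℂ) : ℝ :=
  sSup {r : ℝ | 0 < r ∧ ∀ z : ℂ, 0 < ‖z‖ → ‖z‖ < r →
    α < (z * deriv f z / f z).re}

noncomputable def radiusConvex (α : ℝ) (f : ℂ → ℂ) : ℝ :=
  sSup {r : ℝ | 0 < r ∧ ∀ z : ℂ, ‖z‖ < r →
    α < (1 + z * deriv (deriv f) z / deriv f z).re}

noncomputable def fML (γ σ q : ℝ) (z : ℂ) : ℂ :=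
  Complex.exp ((1 / ((γ : ℂ) + 1)) *
    Complex.log (z ^ ((γ : ℂ) + 1) * (qGamma q (γ + 1) : ℂ) * qML γ σ q z))

noncomputable def gML (γ σ q : ℝ) (z : ℂ) : ℂ :=
  z * (qGamma q (γ + 1) : ℂ) * qML γ σ q z

noncomputable def hML (γ σ q : ℝ) (z : ℂ) : ℂ :=
  z * (qGamma q (γ + 1) : ℂ) *
    ∑' n : ℕ,
      (((-1) ^ n * σ ^ (2 * n) * q ^ (n * (n - 1)) / qGamma q (2 * n + γ + 1) : ℝ) : ℂ) * z ^ n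

noncomputable def hMLR (γ σ q : ℝ) (x : ℝ) : ℝ :=
  x * qGamma q (γ + 1) *
    ∑' n : ℕ,
      ((-1) ^ n * σ ^ (2 * n) * q ^ (n * (n - 1)) / qGamma q (2 * n + γ + 1)) * x ^ n

/-!
Dilating the variable turns `h` into `f(s) = ∑ (-1)ⁿ bₙ sⁿ⁺¹` with `b₀ = b₁ = 1` and, because
`Γ_q(x + 1) = [x]_q Γ_q(x)`, with all later ratios `bₙ₊₁ / bₙ` at most
`κ = b₂ = q² [γ+1]_q [γ+2]_q / ([γ+3]_q [γ+4]_q)`. Convexity of `sinh` gives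
`q [x]_q / [x+2]_q ≤ x / (x+2)`, hence `κ ≤ (γ+1)(γ+2) / ((γ+3)(γ+4)) ≤ 2/5`. The claim becomes
`1/4 < r^c(f) < 2 / (8 - 9κ)`.

Write `1 + s f''/f' = N / D` with `N = (s f')' = 1 - 4s + 9κs² - ⋯` and
`D = f' = 1 - 2s + 3κs² - ⋯`. On `|s| ≤ 1/4` the real part of `N · conj D` computed from the
quadratic truncations is at least `9κ/32`, while the geometrically bounded tails contribute only
`O(κ²)`; so `Re (N / D) > 0` on the closed disc, hence on a larger one. At `u = 2 / (8 - 9κ)` both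
series alternate with decreasing terms, and comparison with their partial sums gives
`N(u) < 0 < D(u)`; by continuity the convexity already fails slightly before `u`.
-/

open Complex Filter Topology
open scoped ComplexConjugate

section RadiusConvex

variable {f : ℂ → ℂ} {α : ℝ}

/-- The quantity `1 + z f''(z) / f'(z)`, whose real part enters `radiusConvex`. It takes the
junk value `1` where `f'` vanishes. -/
noncomputable def convexityQuotient (f : ℂ → ℂ) (z : ℂ) : ℂ :=
  1 + z * deriv (deriv f) z / deriv f z

lemma continuousAt_convexityQuotient {z : ℂ} (hf : AnalyticAt ℂ f z) (hz : deriv f z ≠ 0) :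
    ContinuousAt (convexityQuotient f) z :=
  continuousAt_const.add ((continuousAt_id.mul hf.deriv.deriv.continuousAt).div
    hf.deriv.continuousAt hz)

lemma convexityQuotient_const_mul_comp_mul {a c : ℂ} (ha : a ≠ 0) (hc : c ≠ 0) (z : ℂ) :
    convexityQuotient (fun w => a * f (c * w)) z = convexityQuotient f (c * z) := by
  have hderiv (g : ℂ → ℂ) (b : ℂ) :
      deriv (fun w => b * g (c * w)) = fun w => b * c * deriv g (c * w) := by
    funext w
    rw [deriv_const_mul_field, deriv_comp_mul_left, smul_eq_mul, mul_assoc]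
  simp only [convexityQuotient, hderiv]
  congr 1
  rw [show z * (a * c * c * deriv (deriv f) (c * z)) =
    a * c * (c * z * deriv (deriv f) (c * z)) by ring, mul_div_mul_left _ _ (mul_ne_zero ha hc)]

lemma radiusConvex_const_mul_comp_mul {a : ℂ} {c : ℝ} (ha : a ≠ 0) (hc : 0 < c) :
    radiusConvex α (fun z => a * f (c * z)) = radiusConvex α f / c := by
  rw [div_eq_inv_mul, ← smul_eq_mul, radiusConvex, radiusConvex,
    ← Real.sSup_smul_of_nonneg (inv_nonneg.2 hc.le)]
  congr 1
  ext r
  rw [Set.mem_smul_set_iff_inv_smul_mem₀ (inv_ne_zero hc.ne'), inv_inv, smul_eq_mul]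
  have hc' : (c : ℂ) ≠ 0 := ofReal_ne_zero.2 hc.ne'
  have hnorm (z : ℂ) : ‖(c : ℂ) * z‖ = c * ‖z‖ := by
    rw [norm_mul, norm_real, Real.norm_of_nonneg hc.le]
  refine and_congr (mul_pos_iff_of_pos_left hc).symm ⟨fun h z hz => ?_, fun h z hz => ?_⟩
  · have key := h ((c : ℂ)⁻¹ * z) (by
      rwa [norm_mul, norm_inv, norm_real, Real.norm_of_nonneg hc.le, inv_mul_lt_iff₀ hc])
    rwa [← convexityQuotient, convexityQuotient_const_mul_comp_mul ha hc',
      mul_inv_cancel_left₀ hc'] at key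
  · rw [← convexityQuotient, convexityQuotient_const_mul_comp_mul ha hc']
    exact h _ (by rw [hnorm]; gcongr)

lemma norm_mem_upperBounds_of_convexityQuotient_le {w : ℂ} (hw : (convexityQuotient f w).re ≤ α) :
    ‖w‖ ∈ upperBounds {r : ℝ | 0 < r ∧ ∀ z : ℂ, ‖z‖ < r → α < (convexityQuotient f z).re} :=
  fun _ hr => not_lt.1 fun hlt => (hr.2 w hlt).not_ge hw

lemma radiusConvex_lt_norm {w : ℂ} (hw0 : w ≠ 0) (hcont : ContinuousAt (convexityQuotient f) w)
    (hw : (convexityQuotient f w).re < α) : radiusConvex α f < ‖w‖ := by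
  have hray : Tendsto (fun t : ℝ => (t : ℂ) * w) (𝓝[<] 1) (𝓝 w) := by
    have h : Continuous fun t : ℝ => (t : ℂ) * w := by fun_prop
    simpa only [ofReal_one, one_mul] using (h.tendsto 1).mono_left nhdsWithin_le_nhds
  have hnear : ∀ᶠ t : ℝ in 𝓝[<] 1, (convexityQuotient f (t * w)).re < α :=
    hray.eventually ((continuous_re.continuousAt.comp hcont).eventually_lt_const hw)
  have hunit : ∀ᶠ t : ℝ in 𝓝[<] 1, t ∈ Set.Ioo 0 1 := Ioo_mem_nhdsLT one_pos
  obtain ⟨t, ht, ht0, ht1⟩ := (hnear.and hunit).exists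
  calc radiusConvex α f ≤ ‖(t : ℂ) * w‖ :=
        Real.sSup_le (norm_mem_upperBounds_of_convexityQuotient_le ht.le) (norm_nonneg _)
    _ = t * ‖w‖ := by rw [norm_mul, norm_real, Real.norm_of_nonneg ht0.le]
    _ < ‖w‖ := mul_lt_of_lt_one_left (norm_pos_iff.2 hw0) ht1

lemma lt_radiusConvex {r : ℝ} {w : ℂ} (hr : 0 ≤ r) (hw : (convexityQuotient f w).re ≤ α)
    (hcont : ∀ z, ‖z‖ ≤ r → ContinuousAt (convexityQuotient f) z)
    (hpos : ∀ z, ‖z‖ ≤ r → α < (convexityQuotient f z).re) : r < radiusConvex α f := by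
  have hnhds : {z : ℂ | α < (convexityQuotient f z).re} ∈ 𝓝ˢ (Metric.closedBall (0 : ℂ) r) := by
    refine mem_nhdsSet_iff_forall.2 fun z hz => ?_
    rw [mem_closedBall_zero_iff] at hz
    exact (continuous_re.continuousAt.comp (hcont z hz)).eventually_const_lt (hpos z hz)
  obtain ⟨δ, hδ, hsub⟩ :=
    (Metric.hasBasis_nhdsSet_thickening (isCompact_closedBall (0 : ℂ) r)).mem_iff.1 hnhds
  rw [thickening_closedBall hδ hr] at hsub
  have hmem : δ + r ≤ radiusConvex α f :=
    le_csSup ⟨_, norm_mem_upperBounds_of_convexityQuotient_le hw⟩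
      ⟨by positivity, fun z hz => hsub (mem_ball_zero_iff.2 hz)⟩
  linarith

end RadiusConvex

section EulerSeries

variable {c : ℕ → ℂ} {p : ℕ} {r : ℝ} {z : ℂ}

/-- The power series `∑ (n + 1)ᵖ cₙ zⁿ`. It is obtained from `∑ cₙ zⁿ` by applying `p` times the
Euler-type operator `g ↦ (z g)'`; in particular, if `f(z) = z ∑ cₙ zⁿ` then `f'` and `(z f')'` are
the cases `p = 1` and `p = 2`. -/
noncomputable def eulerSeries (c : ℕ → ℂ) (p : ℕ) (z : ℂ) : ℂ :=
  ∑' n : ℕ, ((n + 1 : ℕ) : ℂ) ^ p * c n * z ^ n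

lemma hasDerivAt_mul_eulerSeries
    (hc : Summable fun n : ℕ => ((n + 1 : ℕ) : ℝ) ^ p * ‖c n‖ * r ^ n) (hz : ‖z‖ < r) :
    HasDerivAt (fun w => w * eulerSeries c p w) (eulerSeries c (p + 1) z) z := by
  let F (n : ℕ) (w : ℂ) : ℂ := ((n + 1 : ℕ) : ℂ) ^ p * c n * w ^ (n + 1)
  have hF : (fun w => w * eulerSeries c p w) = fun w => ∑' n, F n w := by
    funext w
    rw [eulerSeries, ← tsum_mul_left]
    exact tsum_congr fun n => by ring
  have hbound (n : ℕ) (w : ℂ) (hw : w ∈ Metric.ball (0 : ℂ) r) :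
      ‖F n w‖ ≤ ((n + 1 : ℕ) : ℝ) ^ p * ‖c n‖ * r ^ n * r := by
    rw [mem_ball_zero_iff] at hw
    rw [norm_mul, norm_mul, norm_pow, norm_pow, norm_natCast, mul_assoc _ (r ^ n), ← pow_succ]
    gcongr
  have hdiff (n : ℕ) : DifferentiableOn ℂ (F n) (Metric.ball 0 r) := by fun_prop
  have hz' : z ∈ Metric.ball (0 : ℂ) r := mem_ball_zero_iff.2 hz
  have hderiv : HasSum (fun n => deriv (F n) z) (deriv (fun w => ∑' n, F n w) z) :=
    hasSum_deriv_of_summable_norm (hc.mul_right r) hdiff Metric.isOpen_ball hbound hz'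
  have hterm (n : ℕ) : deriv (F n) z = ((n + 1 : ℕ) : ℂ) ^ (p + 1) * c n * z ^ n := by
    simp only [F, deriv_const_mul_field, deriv_pow_field, Nat.add_sub_cancel]
    ring
  have hval : eulerSeries c (p + 1) z = deriv (fun w => ∑' n, F n w) z := by
    rw [← hderiv.tsum_eq, eulerSeries]
    exact tsum_congr fun n => (hterm n).symm
  rw [hF, hval]
  exact ((differentiableOn_tsum_of_summable_norm (hc.mul_right r) hdiff Metric.isOpen_ball
    hbound).differentiableAt (Metric.isOpen_ball.mem_nhds hz')).hasDerivAt

lemma summable_norm_mul_pow_of_summable_eulerSeries (hr : 0 ≤ r)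
    (hc : Summable fun n : ℕ => ((n + 1 : ℕ) : ℝ) ^ p * ‖c n‖ * r ^ n) :
    Summable fun n : ℕ => ((n + 1 : ℕ) : ℝ) ^ 0 * ‖c n‖ * r ^ n := by
  refine hc.of_nonneg_of_le (fun n => by positivity) fun n => ?_
  gcongr
  · exact_mod_cast Nat.succ_pos n
  · exact p.zero_le

lemma analyticAt_mul_eulerSeries
    (hc : Summable fun n : ℕ => ((n + 1 : ℕ) : ℝ) ^ p * ‖c n‖ * r ^ n) (hz : ‖z‖ < r) :
    AnalyticAt ℂ (fun w => w * eulerSeries c p w) z :=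
  analyticAt_iff_eventually_differentiableAt.2 <|
    (continuous_norm.continuousAt.eventually_lt_const hz).mono fun _ hw =>
      (hasDerivAt_mul_eulerSeries hc hw).differentiableAt

lemma deriv_mul_eulerSeries_zero
    (hc : Summable fun n : ℕ => ((n + 1 : ℕ) : ℝ) ^ 1 * ‖c n‖ * r ^ n) (hz : ‖z‖ < r) :
    deriv (fun w => w * eulerSeries c 0 w) z = eulerSeries c 1 z :=
  (hasDerivAt_mul_eulerSeries (summable_norm_mul_pow_of_summable_eulerSeries
    ((norm_nonneg z).trans hz.le) hc) hz).deriv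

lemma convexityQuotient_mul_eulerSeries
    (hc : Summable fun n : ℕ => ((n + 1 : ℕ) : ℝ) ^ 1 * ‖c n‖ * r ^ n) (hz : ‖z‖ < r)
    (hne : eulerSeries c 1 z ≠ 0) :
    convexityQuotient (fun w => w * eulerSeries c 0 w) z =
      eulerSeries c 2 z / eulerSeries c 1 z := by
  set f : ℂ → ℂ := fun w => w * eulerSeries c 0 w
  have hf' : deriv f =ᶠ[𝓝 z] eulerSeries c 1 :=
    (continuous_norm.continuousAt.eventually_lt_const hz).mono fun w hw =>
      deriv_mul_eulerSeries_zero hc hw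
  have hf0 : AnalyticAt ℂ f z := analyticAt_mul_eulerSeries
    (summable_norm_mul_pow_of_summable_eulerSeries ((norm_nonneg z).trans hz.le) hc) hz
  have hS1 : HasDerivAt (eulerSeries c 1) (deriv (deriv f) z) z :=
    hf0.deriv.differentiableAt.hasDerivAt.congr_of_eventuallyEq hf'.symm
  have hS2 : eulerSeries c 2 z = eulerSeries c 1 z + z * deriv (deriv f) z := by
    rw [(hasDerivAt_mul_eulerSeries hc hz).unique ((hasDerivAt_id z).mul hS1), id, one_mul]
  rw [convexityQuotient, hf'.self_of_nhds, hS2, add_div, div_self hne]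

lemma continuousAt_convexityQuotient_mul_eulerSeries
    (hc : Summable fun n : ℕ => ((n + 1 : ℕ) : ℝ) ^ 1 * ‖c n‖ * r ^ n) (hz : ‖z‖ < r)
    (hne : eulerSeries c 1 z ≠ 0) :
    ContinuousAt (convexityQuotient fun w => w * eulerSeries c 0 w) z := by
  refine continuousAt_convexityQuotient (analyticAt_mul_eulerSeries
    (summable_norm_mul_pow_of_summable_eulerSeries ((norm_nonneg z).trans hz.le) hc) hz) ?_
  rwa [deriv_mul_eulerSeries_zero hc hz]

end EulerSeries

section QuadraticTruncation

variable {κ : ℝ} {s : ℂ}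

lemma ne_zero_of_re_div_ne_zero {N D : ℂ} (h : (N / D).re ≠ 0) : D ≠ 0 := by
  rintro rfl
  exact h (by rw [div_zero, zero_re])

lemma re_div_pos_of_norm_lt {A B N D : ℂ}
    (h : ‖A‖ * ‖D - B‖ + ‖N - A‖ * ‖D‖ < (A * conj B).re) : 0 < (N / D).re := by
  have hre : 0 < (N * conj D).re := by
    have hsplit : N * conj D = A * conj B + (A * conj (D - B) + (N - A) * conj D) := by
      rw [map_sub]
      ring
    have herr : ‖A * conj (D - B) + (N - A) * conj D‖ ≤ ‖A‖ * ‖D - B‖ + ‖N - A‖ * ‖D‖ := by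
      refine (norm_add_le _ _).trans_eq ?_
      rw [norm_mul, norm_mul, norm_conj, norm_conj]
    have := neg_le_of_abs_le ((abs_re_le_norm _).trans herr)
    rw [hsplit, add_re]
    linarith
  have hD : D ≠ 0 := by
    rintro rfl
    simp at hre
  rw [div_eq_mul_inv, inv_def, ← mul_assoc, re_mul_ofReal]
  exact mul_pos hre (inv_pos.2 (normSq_pos.2 hD))

lemma re_quadratic_mul_conj (κ : ℝ) (s : ℂ) :
    ((1 - 4 * s + 9 * κ * s ^ 2) * conj (1 - 2 * s + 3 * κ * s ^ 2)).re =
      (1 - 4 * s.re + 9 * κ * s.re ^ 2) * (1 - 2 * s.re + 3 * κ * s.re ^ 2) +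
        ((‖s‖ ^ 2 - s.re ^ 2) * (8 - 12 * κ - 30 * κ * s.re) +
          27 * κ ^ 2 * ((‖s‖ ^ 2) ^ 2 - (s.re ^ 2) ^ 2)) := by
  rw [Complex.sq_norm, normSq_apply]
  simp [pow_two]
  ring

lemma le_re_quadratic_mul_conj (hκ0 : 0 ≤ κ) (hκ : κ ≤ 2 / 5) (hs : ‖s‖ ≤ 1 / 4) :
    9 / 32 * κ ≤
      ((1 - 4 * s + 9 * κ * s ^ 2) * conj (1 - 2 * s + 3 * κ * s ^ 2)).re := by
  have hx : s.re ≤ 1 / 4 := (re_le_norm s).trans hs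
  have hxR : s.re ^ 2 ≤ ‖s‖ ^ 2 := sq_le_sq.2 ((abs_re_le_norm s).trans (le_abs_self _))
  -- For fixed `s.re` the real part increases with `‖s‖`: real `s` is the worst case.
  have hcorrection : 0 ≤ (‖s‖ ^ 2 - s.re ^ 2) * (8 - 12 * κ - 30 * κ * s.re) +
      27 * κ ^ 2 * ((‖s‖ ^ 2) ^ 2 - (s.re ^ 2) ^ 2) := by
    have hcoeff : 0 ≤ 8 - 12 * κ - 30 * κ * s.re := by nlinarith
    have hsq : (s.re ^ 2) ^ 2 ≤ (‖s‖ ^ 2) ^ 2 := pow_le_pow_left₀ (sq_nonneg _) hxR 2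
    exact add_nonneg (mul_nonneg (sub_nonneg.2 hxR) hcoeff)
      (mul_nonneg (by positivity) (sub_nonneg.2 hsq))
  have hA : 9 / 16 * κ ≤ 1 - 4 * s.re + 9 * κ * s.re ^ 2 := by
    have hκx : 0 ≤ 1 - 9 / 16 * κ * (1 + 4 * s.re) := by nlinarith
    linarith [mul_nonneg (by linarith : 0 ≤ 1 - 4 * s.re) hκx]
  have hB : 1 / 2 ≤ 1 - 2 * s.re + 3 * κ * s.re ^ 2 := by
    nlinarith [mul_nonneg hκ0 (sq_nonneg s.re)]
  rw [re_quadratic_mul_conj]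
  calc 9 / 32 * κ = 9 / 16 * κ * (1 / 2) := by ring
    _ ≤ (1 - 4 * s.re + 9 * κ * s.re ^ 2) * (1 - 2 * s.re + 3 * κ * s.re ^ 2) :=
      mul_le_mul hA hB (by norm_num) ((by positivity : (0 : ℝ) ≤ 9 / 16 * κ).trans hA)
    _ ≤ _ := le_add_of_nonneg_right hcorrection

lemma norm_quadratic_le (hκ0 : 0 ≤ κ) (p : ℕ) (hs : ‖s‖ ≤ 1 / 4) :
    ‖1 - 2 ^ p * s + 3 ^ p * κ * s ^ 2‖ ≤ 1 + 2 ^ p * (1 / 4) + 3 ^ p * κ * (1 / 4) ^ 2 :=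
  calc ‖1 - 2 ^ p * s + 3 ^ p * κ * s ^ 2‖ ≤ ‖(1 : ℂ)‖ + ‖2 ^ p * s‖ + ‖3 ^ p * κ * s ^ 2‖ :=
        (norm_add_le _ _).trans (by gcongr; exact norm_sub_le _ _)
    _ = 1 + 2 ^ p * ‖s‖ + 3 ^ p * κ * ‖s‖ ^ 2 := by
        simp [abs_of_nonneg hκ0]
    _ ≤ _ := by gcongr

-- The evaluation point is `S₁ / S₂`, where `S₁ = 4` and `S₂ = 16 - 18κ` are the power sums of the
-- reciprocal zeros of any series starting with `1 - 4s + 9κs²`.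
lemma quadratic_two_div_neg (hκ0 : 0 < κ) (hκ : κ < 4 / 9) :
    1 - 2 ^ 2 * (2 / (8 - 9 * κ)) + 3 ^ 2 * κ * (2 / (8 - 9 * κ)) ^ 2 < 0 := by
  have hden : 0 < 8 - 9 * κ := by linarith
  have hfactor : 1 - 2 ^ 2 * (2 / (8 - 9 * κ)) + 3 ^ 2 * κ * (2 / (8 - 9 * κ)) ^ 2 =
      -(9 * κ * (4 - 9 * κ) / (8 - 9 * κ) ^ 2) := by
    field_simp
    ring
  rw [hfactor, neg_lt_zero]
  have : 0 < 4 - 9 * κ := by linarith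
  positivity

end QuadraticTruncation

section AlternatingSeries

/-- The coefficient `(-1)ⁿ bₙ` of an alternating power series. -/
noncomputable def alternating (b : ℕ → ℝ) (n : ℕ) : ℂ := ((-1) ^ n * b n : ℝ)

/-- The modulus `(n + 1)ᵖ bₙ xⁿ` of the `n`-th term of `eulerSeries (alternating b) p` on the
circle of radius `x`. -/
noncomputable def eulerTerm (b : ℕ → ℝ) (p : ℕ) (x : ℝ) (n : ℕ) : ℝ :=
  ((n + 1 : ℕ) : ℝ) ^ p * b n * x ^ n

/-- Positive sequences starting with `b₀ = b₁ = 1` whose successive ratios after the first one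
never exceed `b₂ / b₁ = b₂`. Every log-concave sequence takes this form after replacing `bₙ` by
`bₙ / (b₀ (b₁ / b₀)ⁿ)`. -/
structure RatioDominated (b : ℕ → ℝ) : Prop where
  pos (n : ℕ) : 0 < b n
  zero : b 0 = 1
  one : b 1 = 1
  succ_le {n : ℕ} (hn : 1 ≤ n) : b (n + 1) ≤ b 2 * b n

namespace RatioDominated

variable {b : ℕ → ℝ} {p : ℕ} {x u : ℝ} {s : ℂ}

lemma eulerTerm_nonneg (hb : RatioDominated b) (hx : 0 ≤ x) (n : ℕ) : 0 ≤ eulerTerm b p x n := by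
  have := hb.pos n
  unfold eulerTerm
  positivity

lemma norm_term_eq (hb : RatioDominated b) (n : ℕ) :
    ‖((n + 1 : ℕ) : ℂ) ^ p * alternating b n * s ^ n‖ = eulerTerm b p ‖s‖ n := by
  rw [alternating, eulerTerm, norm_mul, norm_mul, norm_pow, norm_pow, norm_natCast, norm_real,
    norm_mul, norm_pow, norm_neg, norm_one, one_pow, one_mul, Real.norm_of_nonneg (hb.pos n).le]

lemma eulerTerm_succ_le (hb : RatioDominated b) (hx : 0 ≤ x) {k n : ℕ} (hk : 1 ≤ k) (hkn : k ≤ n) :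
    eulerTerm b p x (n + 1) ≤
      (1 + 1 / ((k : ℝ) + 1)) ^ p * (b 2 * x) * eulerTerm b p x n := by
  have hweight : ((n + 1 + 1 : ℕ) : ℝ) ≤ (1 + 1 / ((k : ℝ) + 1)) * ((n + 1 : ℕ) : ℝ) := by
    have hkn' : (k : ℝ) + 1 ≤ (n : ℝ) + 1 := by gcongr
    have hone : 1 ≤ 1 / ((k : ℝ) + 1) * ((n : ℝ) + 1) := by
      rwa [one_div_mul_eq_div, one_le_div (by positivity)]
    push_cast
    linarith
  have := hb.pos (n + 1)
  calc eulerTerm b p x (n + 1)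
      ≤ ((1 + 1 / ((k : ℝ) + 1)) * ((n + 1 : ℕ) : ℝ)) ^ p * (b 2 * b n) * x ^ (n + 1) := by
        unfold eulerTerm
        gcongr
        exact hb.succ_le (hk.trans hkn)
    _ = (1 + 1 / ((k : ℝ) + 1)) ^ p * (b 2 * x) * eulerTerm b p x n := by
        rw [mul_pow, eulerTerm]
        ring

lemma summable_eulerTerm (hb : RatioDominated b) (hx : 0 ≤ x) (hbx : b 2 * x < 1) :
    Summable (eulerTerm b p x) := by
  have hlim : Tendsto (fun k : ℕ => (1 + 1 / ((k : ℝ) + 1)) ^ p * (b 2 * x)) atTop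
      (𝓝 (b 2 * x)) := by
    simpa only [add_zero, one_pow, one_mul] using
      ((tendsto_one_div_add_atTop_nhds_zero_nat.const_add (1 : ℝ)).pow p).mul_const (b 2 * x)
  obtain ⟨k, hratio, hk⟩ := ((hlim.eventually_lt_const hbx).and (eventually_ge_atTop 1)).exists
  refine summable_of_ratio_norm_eventually_le hratio ((eventually_ge_atTop k).mono fun n hn => ?_)
  have hnorm (m : ℕ) : ‖eulerTerm b p x m‖ = eulerTerm b p x m :=
    Real.norm_of_nonneg (hb.eulerTerm_nonneg hx m)
  rw [hnorm, hnorm]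
  exact hb.eulerTerm_succ_le hx hk hn

lemma summable_alternating (hb : RatioDominated b) (hb2 : b 2 < 1) :
    Summable fun n : ℕ => ((n + 1 : ℕ) : ℝ) ^ p * ‖alternating b n‖ * 1 ^ n := by
  refine (hb.summable_eulerTerm zero_le_one (p := p) (by rwa [mul_one])).congr fun n => ?_
  have h := hb.norm_term_eq (p := p) (s := 1) n
  rw [norm_one] at h
  rw [← h, norm_mul, norm_mul, norm_pow, norm_pow, norm_natCast, norm_one]

lemma norm_eulerSeries_sub_sum_range_le (hb : RatioDominated b) {k : ℕ} (hk : 1 ≤ k)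
    (hratio : (1 + 1 / ((k : ℝ) + 1)) ^ p * (b 2 * ‖s‖) < 1) :
    ‖eulerSeries (alternating b) p s -
        ∑ n ∈ Finset.range k, ((n + 1 : ℕ) : ℂ) ^ p * alternating b n * s ^ n‖ ≤
      eulerTerm b p ‖s‖ k / (1 - (1 + 1 / ((k : ℝ) + 1)) ^ p * (b 2 * ‖s‖)) := by
  have hbs0 : 0 ≤ b 2 * ‖s‖ := mul_nonneg (hb.pos 2).le (norm_nonneg s)
  have hbs : b 2 * ‖s‖ < 1 :=
    (le_mul_of_one_le_left hbs0 (one_le_pow₀ (le_add_of_nonneg_right (by positivity)))).trans_lt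
      hratio
  set ρ : ℝ := (1 + 1 / ((k : ℝ) + 1)) ^ p * (b 2 * ‖s‖)
  have hρ : 0 ≤ ρ := by positivity
  have hsum : Summable fun n : ℕ => ((n + 1 : ℕ) : ℂ) ^ p * alternating b n * s ^ n :=
    ((hb.summable_eulerTerm (norm_nonneg s) hbs).congr fun n => (hb.norm_term_eq n).symm).of_norm
  rw [eulerSeries, ← hsum.sum_add_tsum_nat_add k, add_sub_cancel_left, div_eq_inv_mul]
  refine tsum_of_norm_bounded ((hasSum_geometric_of_lt_one hρ hratio).mul_right _) fun n => ?_
  rw [hb.norm_term_eq]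
  simpa only [zero_add] using le_geom (u := fun m => eulerTerm b p ‖s‖ (m + k)) hρ n
    fun m _ => by
      simpa only [add_right_comm] using
        hb.eulerTerm_succ_le (norm_nonneg s) hk (Nat.le_add_left k m)

lemma sum_range_three_eq (hb : RatioDominated b) :
    ∑ n ∈ Finset.range 3, ((n + 1 : ℕ) : ℂ) ^ p * alternating b n * s ^ n =
      1 - 2 ^ p * s + 3 ^ p * b 2 * s ^ 2 := by
  simp only [Finset.sum_range_succ, Finset.sum_range_zero, alternating, hb.zero, hb.one]
  push_cast
  norm_num
  ring

lemma eulerSeries_alternating_ofReal (b : ℕ → ℝ) (p : ℕ) (u : ℝ) :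
    eulerSeries (alternating b) p u = (∑' n, (-1) ^ n * eulerTerm b p u n : ℝ) := by
  rw [eulerSeries, ofReal_tsum]
  refine tsum_congr fun n => ?_
  simp only [alternating, eulerTerm]
  push_cast
  ring

lemma tsum_alternating_mem_Icc (hb : RatioDominated b) (hu : 0 ≤ u)
    (hratio : (3 / 2 : ℝ) ^ p * (b 2 * u) < 1) :
    ∑' n, (-1) ^ n * eulerTerm b p u n ∈
      Set.Icc (1 - 2 ^ p * u) (1 - 2 ^ p * u + 3 ^ p * b 2 * u ^ 2) := by
  have hbu : b 2 * u < 1 :=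
    (le_mul_of_one_le_left (mul_nonneg (hb.pos 2).le hu) (one_le_pow₀ (by norm_num))).trans_lt
      hratio
  have hanti : Antitone fun n => eulerTerm b p u (n + 1) := antitone_nat_of_succ_le fun n => by
    refine (hb.eulerTerm_succ_le hu le_rfl (Nat.le_add_left 1 n)).trans
      (mul_le_of_le_one_left (hb.eulerTerm_nonneg hu _) ?_)
    norm_num at hratio ⊢
    exact hratio.le
  have hsum : Summable (eulerTerm b p u) := hb.summable_eulerTerm hu hbu
  have hlim := ((summable_nat_add_iff 1).2 hsum).tendsto_alternating_series_tsum
  have hlower := hanti.alternating_series_le_tendsto hlim 1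
  have hupper := hanti.tendsto_le_alternating_series hlim 0
  have hsplit : ∑' n, (-1) ^ n * eulerTerm b p u n =
      1 - ∑' n, (-1) ^ n * eulerTerm b p u (n + 1) := by
    rw [hsum.alternating.tsum_eq_zero_add, sub_eq_add_neg, ← tsum_neg]
    congr 1
    · simp [eulerTerm, hb.zero]
    · exact tsum_congr fun n => by ring
  have hterm1 : eulerTerm b p u 1 = 2 ^ p * u := by norm_num [eulerTerm, hb.one]
  have hterm2 : eulerTerm b p u 2 = 3 ^ p * b 2 * u ^ 2 := by norm_num [eulerTerm]
  norm_num [Finset.sum_range_succ, hterm1, hterm2] at hlower hupper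
  rw [hsplit]
  constructor <;> linarith

lemma norm_eulerSeries_sub_quadratic_le (hb : RatioDominated b) (hb2 : b 2 ≤ 2 / 5)
    (hs : ‖s‖ ≤ 1 / 4) (hp : p ≤ 2) :
    ‖eulerSeries (alternating b) p s - (1 - 2 ^ p * s + 3 ^ p * b 2 * s ^ 2)‖ ≤
      4 ^ p * b 2 ^ 2 / 54 := by
  have hb2pos := hb.pos 2
  have hb3 : b 3 ≤ b 2 ^ 2 := (hb.succ_le one_le_two).trans_eq (sq _).symm
  have hratio : (1 + 1 / (((3 : ℕ) : ℝ) + 1)) ^ p * (b 2 * ‖s‖) ≤ 5 / 32 :=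
    calc (1 + 1 / (((3 : ℕ) : ℝ) + 1)) ^ p * (b 2 * ‖s‖)
        ≤ (1 + 1 / (((3 : ℕ) : ℝ) + 1)) ^ 2 * (2 / 5 * (1 / 4)) := by
          gcongr
          norm_num
      _ = 5 / 32 := by norm_num
  have hfirst : eulerTerm b p ‖s‖ 3 ≤ 4 ^ p * b 2 ^ 2 * (1 / 4) ^ 3 := by
    have h4 : ((3 + 1 : ℕ) : ℝ) = 4 := by norm_num
    rw [eulerTerm, h4]
    gcongr
  rw [← hb.sum_range_three_eq]
  calc _ ≤ eulerTerm b p ‖s‖ 3 / (1 - (1 + 1 / (((3 : ℕ) : ℝ) + 1)) ^ p * (b 2 * ‖s‖)) :=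
        hb.norm_eulerSeries_sub_sum_range_le (by norm_num) (hratio.trans_lt (by norm_num))
    _ ≤ 4 ^ p * b 2 ^ 2 * (1 / 4) ^ 3 / (1 - 5 / 32) := by gcongr
    _ = 4 ^ p * b 2 ^ 2 / 54 := by ring

lemma re_eulerSeries_div_pos (hb : RatioDominated b) (hb2 : b 2 ≤ 2 / 5) (hs : ‖s‖ ≤ 1 / 4) :
    0 < (eulerSeries (alternating b) 2 s / eulerSeries (alternating b) 1 s).re := by
  have hκ := hb.pos 2
  have hκsq : b 2 ^ 2 ≤ 2 / 5 * b 2 := by nlinarith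
  set A : ℂ := 1 - 2 ^ 2 * s + 3 ^ 2 * b 2 * s ^ 2
  set B : ℂ := 1 - 2 ^ 1 * s + 3 ^ 1 * b 2 * s ^ 2
  set N := eulerSeries (alternating b) 2 s
  set D := eulerSeries (alternating b) 1 s
  have hN : ‖N - A‖ ≤ 4 ^ 2 * b 2 ^ 2 / 54 := hb.norm_eulerSeries_sub_quadratic_le hb2 hs le_rfl
  have hDB : ‖D - B‖ ≤ 4 ^ 1 * b 2 ^ 2 / 54 :=
    hb.norm_eulerSeries_sub_quadratic_le hb2 hs one_le_two
  have hA : ‖A‖ ≤ 89 / 40 := (norm_quadratic_le hκ.le 2 hs).trans (by linarith)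
  have hD : ‖D‖ ≤ 8 / 5 := by
    have hB : ‖B‖ ≤ 1 + 2 ^ 1 * (1 / 4) + 3 ^ 1 * b 2 * (1 / 4) ^ 2 := norm_quadratic_le hκ.le 1 hs
    have := norm_le_norm_add_norm_sub' D B
    linarith
  have hmain : 9 / 32 * b 2 ≤ (A * conj B).re := by
    convert le_re_quadratic_mul_conj hκ.le hb2 hs using 4 <;> norm_num [A, B]
  apply re_div_pos_of_norm_lt
  calc ‖A‖ * ‖D - B‖ + ‖N - A‖ * ‖D‖
      ≤ 89 / 40 * (4 ^ 1 * b 2 ^ 2 / 54) + 4 ^ 2 * b 2 ^ 2 / 54 * (8 / 5) := by gcongr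
    _ < 9 / 32 * b 2 := by linarith
    _ ≤ (A * conj B).re := hmain

lemma re_eulerSeries_div_neg (hb : RatioDominated b) (hu : 0 ≤ u)
    (hratio : (3 / 2 : ℝ) ^ 2 * (b 2 * u) < 1) (hD : 0 < 1 - 2 * u)
    (hN : 1 - 2 ^ 2 * u + 3 ^ 2 * b 2 * u ^ 2 < 0) :
    (eulerSeries (alternating b) 2 u / eulerSeries (alternating b) 1 u).re < 0 := by
  have hN' := (hb.tsum_alternating_mem_Icc (p := 2) hu hratio).2
  have hD' := (hb.tsum_alternating_mem_Icc (p := 1) hu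
    (by linarith [mul_nonneg (hb.pos 2).le hu])).1
  rw [eulerSeries_alternating_ofReal, eulerSeries_alternating_ofReal, ← ofReal_div, ofReal_re]
  exact div_neg_of_neg_of_pos (hN'.trans_lt hN) (by linarith)

theorem radiusConvex_mem_Ioo (hb : RatioDominated b) (hb2 : b 2 ≤ 2 / 5) :
    radiusConvex 0 (fun w => w * eulerSeries (alternating b) 0 w) ∈
      Set.Ioo (1 / 4) (2 / (8 - 9 * b 2)) := by
  have hsum := hb.summable_alternating (p := 1) (by linarith)
  have hcont {z : ℂ} := continuousAt_convexityQuotient_mul_eulerSeries (z := z) hsum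
  have hquot {z : ℂ} := convexityQuotient_mul_eulerSeries (z := z) hsum
  have hden : 0 < 8 - 9 * b 2 := by linarith
  have hquad := quadratic_two_div_neg (hb.pos 2) (by linarith)
  set u : ℝ := 2 / (8 - 9 * b 2)
  have hu0 : 0 < u := div_pos two_pos hden
  have hu : u < 1 / 2 := (div_lt_div_iff₀ hden two_pos).2 (by linarith)
  have hnorm : ‖(u : ℂ)‖ = u := by rw [norm_real, Real.norm_of_nonneg hu0.le]
  have hu1 : ‖(u : ℂ)‖ < 1 := by linarith
  have hratio : b 2 * u ≤ 2 / 5 * (1 / 2) := by gcongr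
  have hneg := hb.re_eulerSeries_div_neg hu0.le (by linarith) (by linarith) hquad
  have hne := ne_zero_of_re_div_ne_zero hneg.ne
  rw [← hquot hu1 hne] at hneg
  refine ⟨lt_radiusConvex (by norm_num) hneg.le (fun z hz => ?_) fun z hz => ?_,
    (radiusConvex_lt_norm (ofReal_ne_zero.2 hu0.ne') (hcont hu1 hne) hneg).trans_eq hnorm⟩
  all_goals
    have hpos := hb.re_eulerSeries_div_pos hb2 hz
    have hne := ne_zero_of_re_div_ne_zero hpos.ne'
    have hz1 : ‖z‖ < 1 := hz.trans_lt (by norm_num)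
  · exact hcont hz1 hne
  · rwa [hquot hz1 hne]

end RatioDominated

end AlternatingSeries

section QGamma

variable {a q x y : ℝ}

lemma qPochInf_pos (hq0 : 0 < q) (hq1 : q < 1) (ha : a < 1) : 0 < qPochInf a q := by
  have hfactor (k : ℕ) : 0 < 1 + -(a * q ^ k) := by
    have hle : q ^ k ≤ 1 := pow_le_one₀ hq0.le hq1.le
    have hpos : 0 < q ^ k := by positivity
    nlinarith
  have hprod := Real.rexp_tsum_eq_tprod hfactor (Real.summable_log_one_add_of_summable
    ((summable_geometric_of_lt_one hq0.le hq1).mul_left a).neg)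
  simp only [← sub_eq_add_neg] at hprod
  rw [qPochInf, ← hprod]
  exact Real.exp_pos _

lemma qPochInf_eq_one_sub_mul (a : ℝ) (hq0 : 0 < q) (hq1 : q < 1) :
    qPochInf a q = (1 - a) * qPochInf (a * q) q := by
  have hshift (k : ℕ) : 1 - a * q * q ^ k = 1 - a * q ^ (k + 1) := by ring
  have hmul : Multipliable fun k : ℕ => 1 + -(a * q * q ^ k) :=
    Real.multipliable_one_add_of_summable
      ((summable_geometric_of_lt_one hq0.le hq1).mul_left (a * q)).neg
  simp only [← sub_eq_add_neg, hshift] at hmul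
  simp only [qPochInf, hshift]
  rw [tprod_eq_zero_mul' (f := fun k : ℕ => 1 - a * q ^ k) hmul, pow_zero, mul_one]

lemma qGamma_pos (hq0 : 0 < q) (hq1 : q < 1) (hx : 0 < x) : 0 < qGamma q x :=
  div_pos (mul_pos (qPochInf_pos hq0 hq1 hq1) (Real.rpow_pos_of_pos (sub_pos.2 hq1) _))
    (qPochInf_pos hq0 hq1 (Real.rpow_lt_one hq0.le hq1 hx))

/-- The `q`-number `[x]_q`, the multiplier in the functional equation of `Γ_q`. -/
noncomputable def qNumber (q x : ℝ) : ℝ := (1 - q ^ x) / (1 - q)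

lemma qNumber_pos (hq0 : 0 < q) (hq1 : q < 1) (hx : 0 < x) : 0 < qNumber q x :=
  div_pos (sub_pos.2 (Real.rpow_lt_one hq0.le hq1 hx)) (sub_pos.2 hq1)

lemma qNumber_le_qNumber (hq0 : 0 < q) (hq1 : q < 1) (hxy : x ≤ y) :
    qNumber q x ≤ qNumber q y := by
  have h := Real.rpow_le_rpow_of_exponent_ge hq0 hq1.le hxy
  have := sub_pos.2 hq1
  unfold qNumber
  gcongr

lemma qGamma_add_one (hq0 : 0 < q) (hq1 : q < 1) (hx : 0 < x) :
    qGamma q (x + 1) = qNumber q x * qGamma q x := by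
  have hrec := qPochInf_eq_one_sub_mul (q ^ x) hq0 hq1
  rw [← Real.rpow_add_one hq0.ne'] at hrec
  have hq : 0 < 1 - q := sub_pos.2 hq1
  have hpow : (1 - q) ^ (1 - x) = (1 - q) ^ (1 - (x + 1)) * (1 - q) := by
    rw [← Real.rpow_add_one hq.ne']
    congr 1
    ring
  have hqx : 1 - q ^ x ≠ 0 := (sub_pos.2 (Real.rpow_lt_one hq0.le hq1 hx)).ne'
  have hpoch : qPochInf (q ^ (x + 1)) q ≠ 0 :=
    (qPochInf_pos hq0 hq1 (Real.rpow_lt_one hq0.le hq1 (by linarith))).ne'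
  rw [qGamma, qGamma, qNumber, hrec, hpow]
  field_simp

lemma qGamma_add_three (hq0 : 0 < q) (hq1 : q < 1) (hx : -1 < x) :
    qGamma q (x + 3) = qNumber q (x + 1) * qNumber q (x + 2) * qGamma q (x + 1) := by
  rw [show x + 3 = x + 2 + 1 by ring, qGamma_add_one hq0 hq1 (by linarith),
    show x + 2 = x + 1 + 1 by ring, qGamma_add_one hq0 hq1 (by linarith)]
  ring

lemma convexOn_sinh : ConvexOn ℝ (Set.Ici 0) Real.sinh := by
  refine MonotoneOn.convexOn_of_deriv (convex_Ici 0) Real.continuous_sinh.continuousOn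
    Real.differentiable_sinh.differentiableOn fun x hx y hy hxy => ?_
  rw [interior_Ici] at hx hy
  rw [Real.deriv_sinh, Real.cosh_le_cosh, abs_of_pos hx, abs_of_pos hy]
  exact hxy

lemma sinh_mul_le {t : ℝ} (ht : 0 ≤ t) (hx : 0 ≤ x) (hxy : x ≤ y) (hy : 0 < y) :
    Real.sinh (x * t) ≤ x / y * Real.sinh (y * t) := by
  have hmem : y * t ∈ Set.Ici (0 : ℝ) := mul_nonneg hy.le ht
  have h := convexOn_sinh.2 (Set.mem_Ici.2 le_rfl) hmem (sub_nonneg.2 ((div_le_one hy).2 hxy))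
    (div_nonneg hx hy.le) (sub_add_cancel 1 (x / y))
  rwa [smul_zero, zero_add, smul_eq_mul, Real.sinh_zero, smul_zero, zero_add, smul_eq_mul,
    ← mul_assoc, div_mul_cancel₀ x hy.ne'] at h

lemma one_sub_rpow_eq_sinh (hq0 : 0 < q) (x : ℝ) :
    1 - q ^ x = 2 * q ^ (x / 2) * Real.sinh (x * (-Real.log q / 2)) := by
  rw [Real.sinh_eq, Real.rpow_def_of_pos hq0, Real.rpow_def_of_pos hq0]
  have h₁ : Real.exp (Real.log q * (x / 2)) * Real.exp (x * (-Real.log q / 2)) = 1 := by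
    rw [← Real.exp_add, ← Real.exp_zero]
    congr 1
    ring
  have h₂ : Real.exp (Real.log q * (x / 2)) * Real.exp (-(x * (-Real.log q / 2))) =
      Real.exp (Real.log q * x) := by
    rw [← Real.exp_add]
    congr 1
    ring
  linear_combination h₂ - h₁

lemma rpow_mul_qNumber_div_qNumber_le (hq0 : 0 < q) (hq1 : q < 1) (hx : 0 < x) (hxy : x ≤ y) :
    q ^ ((y - x) / 2) * (qNumber q x / qNumber q y) ≤ x / y := by
  have hy : 0 < y := hx.trans_le hxy
  have := sub_pos.2 hq1
  have hsinh := sinh_mul_le (t := -Real.log q / 2)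
    (by linarith [Real.log_nonpos hq0.le hq1.le]) hx.le hxy hy
  have hpow : q ^ ((y - x) / 2) * q ^ (x / 2) = q ^ (y / 2) := by
    rw [← Real.rpow_add hq0]
    congr 1
    ring
  rw [← mul_div_assoc, div_le_iff₀ (qNumber_pos hq0 hq1 hy)]
  calc q ^ ((y - x) / 2) * qNumber q x
      = 2 * q ^ (y / 2) / (1 - q) * Real.sinh (x * (-Real.log q / 2)) := by
        rw [qNumber, one_sub_rpow_eq_sinh hq0, ← hpow]
        ring
    _ ≤ 2 * q ^ (y / 2) / (1 - q) * (x / y * Real.sinh (y * (-Real.log q / 2))) := by gcongr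
    _ = x / y * qNumber q y := by
        rw [qNumber, one_sub_rpow_eq_sinh hq0]
        ring

end QGamma

section Normalization

variable {q γ σ : ℝ}

/-- The moduli of the Taylor coefficients of `hML` after a dilation of the variable that makes the
first two of them equal to `1`; see `hML_eq`. -/
noncomputable def qMLCoeff (q γ : ℝ) (n : ℕ) : ℝ :=
  qGamma q (γ + 1) * (qGamma q (γ + 3) / qGamma q (γ + 1)) ^ n * q ^ (n * (n - 1)) /
    qGamma q (2 * n + γ + 1)

lemma qMLCoeff_pos (hq0 : 0 < q) (hq1 : q < 1) (hγ : -1 < γ) (n : ℕ) : 0 < qMLCoeff q γ n := by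
  have h₁ := qGamma_pos hq0 hq1 (x := γ + 1) (by linarith)
  have h₃ := qGamma_pos hq0 hq1 (x := γ + 3) (by linarith)
  have hₙ := qGamma_pos hq0 hq1 (x := 2 * n + γ + 1) (by linarith [n.cast_nonneg (α := ℝ)])
  unfold qMLCoeff
  positivity

lemma qMLCoeff_succ (hq0 : 0 < q) (hq1 : q < 1) (hγ : -1 < γ) (n : ℕ) :
    qMLCoeff q γ (n + 1) = q ^ (2 * n) * (qNumber q (γ + 1) / qNumber q (2 * n + γ + 1)) *
      (qNumber q (γ + 2) / qNumber q (2 * n + γ + 2)) * qMLCoeff q γ n := by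
  have hn : 0 ≤ 2 * (n : ℝ) := by positivity
  have hΓ₁ := (qGamma_pos hq0 hq1 (x := γ + 1) (by linarith)).ne'
  have hΓₙ := (qGamma_pos hq0 hq1 (x := 2 * n + γ + 1) (by linarith)).ne'
  have hₙ₁ := (qNumber_pos hq0 hq1 (x := 2 * n + γ + 1) (by linarith)).ne'
  have hₙ₂ := (qNumber_pos hq0 hq1 (x := 2 * n + γ + 2) (by linarith)).ne'
  have hcast : 2 * ((n + 1 : ℕ) : ℝ) + γ + 1 = 2 * n + γ + 3 := by
    push_cast
    ring
  have hexp : (n + 1) * (n + 1 - 1) = 2 * n + n * (n - 1) := by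
    cases n
    · rfl
    · simp only [Nat.add_sub_cancel]
      ring
  rw [qMLCoeff, qMLCoeff, hcast, qGamma_add_three hq0 hq1 hγ,
    qGamma_add_three hq0 hq1 (by linarith), hexp]
  field_simp
  ring

lemma qMLCoeff_zero (hq0 : 0 < q) (hq1 : q < 1) (hγ : -1 < γ) : qMLCoeff q γ 0 = 1 := by
  have h := (qGamma_pos hq0 hq1 (x := γ + 1) (by linarith)).ne'
  simp [qMLCoeff, h]

lemma qMLCoeff_one (hq0 : 0 < q) (hq1 : q < 1) (hγ : -1 < γ) : qMLCoeff q γ 1 = 1 := by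
  have h₁ := (qNumber_pos hq0 hq1 (x := γ + 1) (by linarith)).ne'
  have h₂ := (qNumber_pos hq0 hq1 (x := γ + 2) (by linarith)).ne'
  simp [qMLCoeff_succ hq0 hq1 hγ, qMLCoeff_zero hq0 hq1 hγ, h₁, h₂]

lemma qMLCoeff_two_eq_qNumber (hq0 : 0 < q) (hq1 : q < 1) (hγ : -1 < γ) :
    qMLCoeff q γ 2 = q ^ 2 * (qNumber q (γ + 1) / qNumber q (γ + 3)) *
      (qNumber q (γ + 2) / qNumber q (γ + 4)) := by
  have h₃ : 2 * ((1 : ℕ) : ℝ) + γ + 1 = γ + 3 := by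
    push_cast
    ring
  have h₄ : 2 * ((1 : ℕ) : ℝ) + γ + 2 = γ + 4 := by
    push_cast
    ring
  rw [qMLCoeff_succ hq0 hq1 hγ, qMLCoeff_one hq0 hq1 hγ, mul_one, mul_one, h₃, h₄]

lemma ratioDominated_qMLCoeff (hq0 : 0 < q) (hq1 : q < 1) (hγ : -1 < γ) :
    RatioDominated (qMLCoeff q γ) where
  pos := qMLCoeff_pos hq0 hq1 hγ
  zero := qMLCoeff_zero hq0 hq1 hγ
  one := qMLCoeff_one hq0 hq1 hγ
  succ_le {n} hn := by
    have hn' : (1 : ℝ) ≤ n := by exact_mod_cast hn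
    have hbn := qMLCoeff_pos hq0 hq1 hγ n
    have h₁ := qNumber_pos hq0 hq1 (x := γ + 1) (by linarith)
    have h₂ := qNumber_pos hq0 hq1 (x := γ + 2) (by linarith)
    have h₃ := qNumber_pos hq0 hq1 (x := γ + 3) (by linarith)
    have h₄ := qNumber_pos hq0 hq1 (x := γ + 4) (by linarith)
    have h₃' : qNumber q (γ + 3) ≤ qNumber q (2 * n + γ + 1) :=
      qNumber_le_qNumber hq0 hq1 (by linarith)
    have h₄' : qNumber q (γ + 4) ≤ qNumber q (2 * n + γ + 2) :=
      qNumber_le_qNumber hq0 hq1 (by linarith)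
    have h₁₃ := div_pos h₁ (h₃.trans_le h₃')
    have h₂₄ := div_pos h₂ (h₄.trans_le h₄')
    have hpow : q ^ (2 * n) ≤ q ^ 2 := pow_le_pow_of_le_one hq0.le hq1.le (by lia)
    rw [qMLCoeff_succ hq0 hq1 hγ, qMLCoeff_two_eq_qNumber hq0 hq1 hγ]
    gcongr

lemma qMLCoeff_two_le (hq0 : 0 < q) (hq1 : q < 1) (hγ : -1 < γ) :
    qMLCoeff q γ 2 ≤ (γ + 1) / (γ + 3) * ((γ + 2) / (γ + 4)) := by
  have h₁ := rpow_mul_qNumber_div_qNumber_le hq0 hq1 (x := γ + 1) (y := γ + 3) (by linarith)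
    (by linarith)
  have h₂ := rpow_mul_qNumber_div_qNumber_le hq0 hq1 (x := γ + 2) (y := γ + 4) (by linarith)
    (by linarith)
  rw [show (γ + 3 - (γ + 1)) / 2 = 1 by ring, Real.rpow_one] at h₁
  rw [show (γ + 4 - (γ + 2)) / 2 = 1 by ring, Real.rpow_one] at h₂
  have hpos := qNumber_pos hq0 hq1 (x := γ + 2) (by linarith)
  have hpos' := qNumber_pos hq0 hq1 (x := γ + 4) (by linarith)
  calc qMLCoeff q γ 2 = q * (qNumber q (γ + 1) / qNumber q (γ + 3)) *
        (q * (qNumber q (γ + 2) / qNumber q (γ + 4))) := by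
        rw [qMLCoeff_two_eq_qNumber hq0 hq1 hγ]
        ring
    _ ≤ (γ + 1) / (γ + 3) * ((γ + 2) / (γ + 4)) :=
        mul_le_mul h₁ h₂ (by positivity) (div_nonneg (by linarith) (by linarith))

lemma qMLCoeff_two (hq0 : 0 < q) (hq1 : q < 1) (hγ : -1 < γ) :
    qMLCoeff q γ 2 = q ^ 2 * qGamma q (γ + 3) ^ 2 / (qGamma q (γ + 1) * qGamma q (γ + 5)) := by
  have h₁ := (qGamma_pos hq0 hq1 (x := γ + 1) (by linarith)).ne'
  have hcast : 2 * ((2 : ℕ) : ℝ) + γ + 1 = γ + 5 := by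
    push_cast
    ring
  rw [qMLCoeff, hcast]
  field_simp

lemma hML_eq {c : ℝ} (hc : c ≠ 0) (hcσ : c * (qGamma q (γ + 3) / qGamma q (γ + 1)) = σ ^ 2) :
    hML γ σ q = fun z =>
      (c : ℂ)⁻¹ * (fun w => w * eulerSeries (alternating (qMLCoeff q γ)) 0 w) (c * z) := by
  funext z
  have hterm (n : ℕ) : qGamma q (γ + 1) *
      ((-1) ^ n * σ ^ (2 * n) * q ^ (n * (n - 1)) / qGamma q (2 * n + γ + 1)) =
      (-1) ^ n * qMLCoeff q γ n * c ^ n := by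
    rw [pow_mul, ← hcσ, qMLCoeff, mul_pow]
    ring
  simp only [hML, eulerSeries, alternating]
  rw [mul_assoc (c : ℂ), inv_mul_cancel_left₀ (ofReal_ne_zero.2 hc), mul_assoc, ← tsum_mul_left]
  congr 1
  refine tsum_congr fun n => ?_
  rw [← mul_assoc, ← ofReal_mul, hterm, ofReal_mul, ofReal_pow, pow_zero, one_mul, mul_pow,
    mul_assoc]

lemma radiusConvex_hML {α c : ℝ} (hc : 0 < c)
    (hcσ : c * (qGamma q (γ + 3) / qGamma q (γ + 1)) = σ ^ 2) :
    radiusConvex α (hML γ σ q) =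
      radiusConvex α (fun w => w * eulerSeries (alternating (qMLCoeff q γ)) 0 w) / c := by
  rw [hML_eq hc.ne' hcσ, ← radiusConvex_const_mul_comp_mul
    (f := fun w => w * eulerSeries (alternating (qMLCoeff q γ)) 0 w)
    (inv_ne_zero (ofReal_ne_zero.2 hc.ne')) hc]

end Normalization

theorem stmt17_general (q σ γ : ℝ) (hq0 : 0 < q) (hq1 : q < 1) (hσ : σ ≠ 0)
    (hγ : -1 < γ) (hγ2 : γ ≤ 2) :
    qGamma q (γ + 3) / (4 * σ ^ 2 * qGamma q (γ + 1)) <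
      radiusConvex 0 (hML γ σ q) ∧
    radiusConvex 0 (hML γ σ q) <
      2 * qGamma q (γ + 3) * qGamma q (γ + 5) /
        (σ ^ 2 * (8 * qGamma q (γ + 1) * qGamma q (γ + 5) -
          9 * q ^ 2 * qGamma q (γ + 3) ^ 2)) := by
  have h₁ := qGamma_pos hq0 hq1 (x := γ + 1) (by linarith)
  have h₃ := qGamma_pos hq0 hq1 (x := γ + 3) (by linarith)
  have h₅ := qGamma_pos hq0 hq1 (x := γ + 5) (by linarith)
  have hκ : qMLCoeff q γ 2 ≤ 2 / 5 := by
    refine (qMLCoeff_two_le hq0 hq1 hγ).trans ?_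
    rw [div_mul_div_comm, div_le_div_iff₀ (by nlinarith) (by norm_num)]
    nlinarith
  obtain ⟨hlower, hupper⟩ := (ratioDominated_qMLCoeff hq0 hq1 hγ).radiusConvex_mem_Ioo hκ
  have hden : 8 - 9 * qMLCoeff q γ 2 ≠ 0 := by linarith
  set c : ℝ := σ ^ 2 * qGamma q (γ + 1) / qGamma q (γ + 3) with hc
  have hc0 : 0 < c := by positivity
  have hcσ : c * (qGamma q (γ + 3) / qGamma q (γ + 1)) = σ ^ 2 := by
    rw [hc]
    field_simp
  rw [radiusConvex_hML hc0 hcσ]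
  constructor
  · refine Eq.trans_lt ?_ (div_lt_div_of_pos_right hlower hc0)
    rw [hc]
    field_simp
  · refine (div_lt_div_of_pos_right hupper hc0).trans_eq ?_
    rw [qMLCoeff_two hq0 hq1 hγ] at hden ⊢
    rw [hc]
    field_simp

theorem stmt17 (q σ γ : ℝ) (hq0 : 0 < q) (hq1 : q < 1) (hσ : 0 < σ)
    (hγ0 : 0 ≤ γ) (hγ2 : γ < 2) (hR : condR q γ) :
    qGamma q (γ + 3) / (4 * σ ^ 2 * qGamma q (γ + 1)) <
      radiusConvex 0 (hML γ σ q) ∧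
    radiusConvex 0 (hML γ σ q) <
      2 * qGamma q (γ + 3) * qGamma q (γ + 5) /
        (σ ^ 2 * (8 * qGamma q (γ + 1) * qGamma q (γ + 5) -
          9 * q ^ 2 * qGamma q (γ + 3) ^ 2)) :=
  stmt17_general q σ γ hq0 hq1 hσ.ne' (by linarith) hγ2.le
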